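/- Universal and synchronous validity of TeamLTL coincide: for every TeamLTL formula φ, every nonempty team T satisfies T ⊨∀ φ if and only if every nonempty team T' satisfies T' ⊨ₛ φ. -/

import Mathlib

namespace TTS

abbrev Trace (AP : Type) := ℕ → Set AP

def IsStutTef {ι : Type} (τ : ℕ → ι → ℕ) : Prop :=
  ∀ n i, τ n i ≤ τ (n + 1) i

def IsTef {ι : Type} (τ : ℕ → ι → ℕ) : Prop :=
  IsStutTef τ ∧ (∀ n, τ n ≠ τ (n + 1)) ∧ (∀ n i, τ (n + 1) i ≤ τ n i + 1)

def Initial {ι : Type} (τ : ℕ → ι → ℕ) : Prop := ∀ i, τ 0 i = 0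

def shift {ι : Type} (τ : ℕ → ι → ℕ) (k : ℕ) : ℕ → ι → ℕ := fun n => τ (n + k)

inductive Formula (AP : Type) : Type
  | atom : AP → Formula AP
  | natom : AP → Formula AP
  | and : Formula AP → Formula AP → Formula AP
  | or : Formula AP → Formula AP → Formula AP
  | X : Formula AP → Formula AP
  | U : Formula AP → Formula AP → Formula AP
  | W : Formula AP → Formula AP → Formula AP

def sat {AP : Type} : {ι : Type} → (ι → Trace AP) → (ℕ → ι → ℕ) → Formula AP → Prop
  | _, T, τ, .atom p => ∀ i, p ∈ T i (τ 0 i)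
  | _, T, τ, .natom p => ∀ i, p ∉ T i (τ 0 i)
  | _, T, τ, .and φ ψ => sat T τ φ ∧ sat T τ ψ
  | ι, T, τ, .or φ ψ =>
      ∃ P : ι → Prop,
        sat (fun i : {i // P i} => T i.1) (fun n i => τ n i.1) φ ∧
        sat (fun i : {i // ¬ P i} => T i.1) (fun n i => τ n i.1) ψ
  | _, T, τ, .X φ => sat T (shift τ 1) φ
  | _, T, τ, .U φ ψ =>
      ∃ k, sat T (shift τ k) ψ ∧ ∀ m, m < k → sat T (shift τ m) φ
  | _, T, τ, .W φ ψ =>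
      ∀ k, sat T (shift τ k) φ ∨ ∃ m, m ≤ k ∧ sat T (shift τ m) ψ

def satE {AP ι : Type} (T : ι → Trace AP) (φ : Formula AP) : Prop :=
  ∃ τ : ℕ → ι → ℕ, IsTef τ ∧ Initial τ ∧ sat T τ φ

def satA {AP ι : Type} (T : ι → Trace AP) (φ : Formula AP) : Prop :=
  ∀ τ : ℕ → ι → ℕ, IsTef τ → Initial τ → sat T τ φ

def satS {AP ι : Type} (T : ι → Trace AP) (φ : Formula AP) : Prop :=
  sat T (fun n _ => n) φ

def tshift {AP : Type} (t : Trace AP) (k : ℕ) : Trace AP := fun n => t (n + k)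

def ltlSat {AP : Type} : Trace AP → Formula AP → Prop
  | t, .atom p => p ∈ t 0
  | t, .natom p => p ∉ t 0
  | t, .and φ ψ => ltlSat t φ ∧ ltlSat t ψ
  | t, .or φ ψ => ltlSat t φ ∨ ltlSat t ψ
  | t, .X φ => ltlSat (tshift t 1) φ
  | t, .U φ ψ => ∃ k, ltlSat (tshift t k) ψ ∧ ∀ m, m < k → ltlSat (tshift t m) φ
  | t, .W φ ψ => ∀ k, ltlSat (tshift t k) φ ∨ ∃ m, m ≤ k ∧ ltlSat (tshift t m) ψ

theorem sat_congr {AP : Type} (φ : Formula AP) : ∀ {ι : Type} (T T' : ι → Trace AP)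
    (τ τ' : ℕ → ι → ℕ), (∀ n i, T i (τ n i) = T' i (τ' n i)) → (sat T τ φ ↔ sat T' τ' φ) := by
  induction φ with
  | atom p => intro ι T T' τ τ' h; simp only [sat, h]
  | natom p => intro ι T T' τ τ' h; simp only [sat, h]
  | and φ ψ ih1 ih2 =>
    intro ι T T' τ τ' h
    simp only [sat]
    rw [ih1 T T' τ τ' h, ih2 T T' τ τ' h]
  | or φ ψ ih1 ih2 =>
    intro ι T T' τ τ' h
    simp only [sat]
    exact exists_congr fun P => and_congr
      (ih1 _ _ _ _ fun n i => h n i.1) (ih2 _ _ _ _ fun n i => h n i.1)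
  | X φ ih =>
    intro ι T T' τ τ' h
    simp only [sat]
    exact ih _ _ _ _ fun n i => h (n + 1) i
  | U φ ψ ih1 ih2 =>
    intro ι T T' τ τ' h
    simp only [sat]
    exact exists_congr fun k => and_congr (ih2 _ _ _ _ fun n i => h (n + k) i)
      (forall_congr' fun m => imp_congr_right fun _ => ih1 _ _ _ _ fun n i => h (n + m) i)
  | W φ ψ ih1 ih2 =>
    intro ι T T' τ τ' h
    simp only [sat]
    exact forall_congr' fun k => or_congr (ih1 _ _ _ _ fun n i => h (n + k) i)
      (exists_congr fun m => and_congr_right fun _ => ih2 _ _ _ _ fun n i => h (n + m) i)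

/-- Universal and synchronous validity of TeamLTL coincide. -/
theorem satA_satS_equivalid (AP : Type) (φ : Formula AP) :
    (∀ (ι : Type) (T : ι → Trace AP), Nonempty ι → satA T φ) ↔
    (∀ (ι : Type) (T : ι → Trace AP), Nonempty ι → satS T φ) := by
  constructor
  · intro H ι T hι
    refine H ι T hι (fun n _ => n) ⟨fun n i => Nat.le_succ n, fun n h => ?_, fun n i => le_rfl⟩
      (fun i => rfl)
    obtain ⟨i⟩ := hι
    have := congrFun h i
    simp at this
  · intro H ι T hι τ _ _
    exact (sat_congr φ T (fun i n => T i (τ n i)) τ (fun n _ => n) fun n i => rfl).2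
      (H ι (fun i n => T i (τ n i)) hι)

end TTS
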